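/- Let A be a d×n matrix with entries in ℕ, each of whose columns is nonzero, and let π : ℕⁿ → ℕ^d be given by π(u) = Au. For b in the image ℕA of π, let P_b ⊂ ℝⁿ be the convex hull of the (finite) fiber π⁻¹(b). Call b ∈ ℕA atomic if there do not exist nonzero b₁, b₂ ∈ ℕA with b₁ + b₂ = b and P_b = P_{b₁} + P_{b₂}, where + denotes Minkowski sum. Then the set of atomic b ∈ ℕA is finite. -/

import Mathlib

open Pointwise

/-- The fiber polytope `P_b = conv(π⁻¹(b)) ⊆ ℝⁿ`, where `π : ℕⁿ → ℕ^d` is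
`π(u) = Au`. -/
def fiberPolytope {d n : ℕ} (A : Matrix (Fin d) (Fin n) ℕ)
    (b : Fin d → ℕ) : Set (Fin n → ℝ) :=
  convexHull ℝ ((fun u : Fin n → ℕ => fun i => (u i : ℝ)) ''
    { u : Fin n → ℕ | A.mulVec u = b })

/-!
If `u ≤ w` then `w = u + t`, so by cancellation `π⁻¹(b') = π⁻¹(b) + π⁻¹(c)` for some `c` as soon as
every point of `π⁻¹(b')` dominates a point of `π⁻¹(b)`, i.e. as soon as the upper set generated by
`π⁻¹(b)` contains the one generated by `π⁻¹(b')`. Taking convex hulls turns this decomposition into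
`P_{b'} = P_b + P_c`. The atomic `b ≠ 0` are therefore pairwise incomparable for this relation, and
they are finitely many because the upper sets of `ℕⁿ` are well-quasi-ordered by reverse inclusion
(Maclagan's theorem).

For the latter, pass to the complementary lower sets: each is a finite union of boxes with corners
in `(ℕ ∪ {∞})ⁿ`, namely the maximal boxes it contains, and Higman's lemma applies to the lists of
corners.
-/

theorem wellQuasiOrdered_list_forall_exists_le (α : Type*) [Preorder α] [WellQuasiOrderedLE α] :
    WellQuasiOrdered fun l₁ l₂ : List α => ∀ a ∈ l₁, ∃ b ∈ l₂, a ≤ b := by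
  have exists_le_of_sublistForall₂ {l₁ l₂ : List α} (h : List.SublistForall₂ (· ≤ ·) l₁ l₂) :
      ∀ a ∈ l₁, ∃ b ∈ l₂, a ≤ b := by
    induction h with
    | nil => simp
    | cons hab _ ih => simpa using ⟨.inl hab, fun a ha => .inr (ih a ha)⟩
    | cons_right _ ih => simpa using fun a ha => .inr (ih a ha)
  intro f
  obtain ⟨i, j, hij, h⟩ :=
    (Set.PartiallyWellOrderedOn.partiallyWellOrderedOn_sublistForall₂ (· ≤ ·)
      (Set.isPWO_of_wellQuasiOrderedLE (Set.univ : Set α))).exists_lt (f := f) (by simp)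
  exact ⟨i, j, hij, exists_le_of_sublistForall₂ h⟩

section CompactElements

theorem isCompactElement_natCast (m : ℕ) : IsCompactElement (m : ℕ∞) := by
  rintro s u ⟨c, hc⟩ - hu hm
  cases m with
  | zero => exact ⟨c, hc, by simp⟩
  | succ k =>
    have hk : (k : ℕ∞) < u := lt_of_lt_of_le (by exact_mod_cast k.lt_succ_self) hm
    obtain ⟨a, ha, hka⟩ := (lt_isLUB_iff hu).1 hk
    exact ⟨a, ha, by simpa using Order.add_one_le_of_lt hka⟩

theorem isCompactElement_pi {ι : Type*} [Finite ι] {α : ι → Type*} [∀ i, PartialOrder (α i)]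
    {x : ∀ i, α i} (hx : ∀ i, IsCompactElement (x i)) : IsCompactElement x := by
  intro s u hne hdir hu hxu
  have exists_coord_le (i : ι) : ∃ c : s, x i ≤ (c : ∀ i, α i) i := by
    obtain ⟨_, ⟨c, hc, rfl⟩, hxc⟩ := hx i (Function.eval i '' s) (u i) (hne.image _)
      (hdir.mono_comp fun _ _ h => h i) (isLUB_pi.1 hu i) (hxu i)
    exact ⟨⟨c, hc⟩, hxc⟩
  choose c hc using exists_coord_le
  have := hne.to_subtype
  obtain ⟨z, hz⟩ := (directedOn_iff_directed.1 hdir).finite_le c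
  exact ⟨z, z.2, fun i => (hc i).trans (hz i i)⟩

variable {α β : Type*} [CompletePartialOrder β]

theorem exists_le_maximal_of_isCompactElement {κ : α → β} (hκ : ∀ x, IsCompactElement (κ x))
    {D : Set α} {b : β} (hb : ∀ x, κ x ≤ b → x ∈ D) :
    ∃ m, b ≤ m ∧ Maximal (fun b => ∀ x, κ x ≤ b → x ∈ D) m := by
  refine zorn_le_nonempty₀ {b | ∀ x, κ x ≤ b → x ∈ D} (fun C hCD hC y hy => ?_) b hb
  have hsup := hC.directedOn.isLUB_sSup
  refine ⟨sSup C, fun x hx => ?_, hsup.1⟩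
  obtain ⟨c, hc, hxc⟩ := hκ x C _ ⟨y, hy⟩ hC.directedOn hsup hx
  exact hCD hc x hxc

variable [Preorder α] [WellQuasiOrderedLE β] {κ : α ↪o β}

theorem exists_list_mem_iff_of_isLowerSet (hκ : ∀ x, IsCompactElement (κ x)) {D : Set α}
    (hD : IsLowerSet D) : ∃ L : List β, ∀ x, x ∈ D ↔ ∃ b ∈ L, κ x ≤ b := by
  have hfin : {b | Maximal (fun b => ∀ x, κ x ≤ b → x ∈ D) b}.Finite :=
    WellQuasiOrderedLE.finite_of_isAntichain (setOfPred_maximal_antichain _)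
  refine ⟨hfin.toFinset.toList, fun x => ⟨fun hx => ?_, fun ⟨m, hm, hxm⟩ => ?_⟩⟩
  · obtain ⟨m, hxm, hm⟩ := exists_le_maximal_of_isCompactElement hκ (D := D) (b := κ x)
      fun y hyx => hD (κ.le_iff_le.1 hyx) hx
    exact ⟨m, by simpa using hm, hxm⟩
  · have hmax : Maximal (fun b => ∀ x, κ x ≤ b → x ∈ D) m := by simpa using hm
    exact hmax.prop x hxm

theorem wellQuasiOrderedLE_lowerSet_of_isCompactElement (hκ : ∀ x, IsCompactElement (κ x)) :
    WellQuasiOrderedLE (LowerSet α) where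
  wqo D := by
    choose L hL using fun k => exists_list_mem_iff_of_isLowerSet hκ (D k).lower
    obtain ⟨i, j, hij, hle⟩ := wellQuasiOrdered_list_forall_exists_le β L
    refine ⟨i, j, hij, fun x hx => ?_⟩
    obtain ⟨a, ha, hxa⟩ := (hL i x).1 hx
    obtain ⟨b, hb, hab⟩ := hle a ha
    exact (hL j x).2 ⟨b, hb, hxa.trans hab⟩

end CompactElements

instance wellQuasiOrderedLE_upperSet_pi_nat {ι : Type*} [Finite ι] :
    WellQuasiOrderedLE (UpperSet (ι → ℕ)) := by
  let κ : (ι → ℕ) ↪o (ι → ℕ∞) :=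
    OrderEmbedding.ofMapLEIff (fun x i => (x i : ℕ∞)) fun x y => by simp [Pi.le_def]
  exact upperSetIsoLowerSet.wellQuasiOrderedLE_iff.2 <|
    wellQuasiOrderedLE_lowerSet_of_isCompactElement (κ := κ) fun x =>
      isCompactElement_pi fun i => isCompactElement_natCast (x i)

section Fibers

variable {N M : Type*} [AddMonoid N] [Preorder N] [ExistsAddOfLE N] [AddLeftCancelMonoid M]

theorem exists_fiber_eq_add_of_upperClosure_le (π : N →+ M) {b b' : M} (hb' : ∃ v, π v = b')
    (hle : upperClosure (π ⁻¹' {b}) ≤ upperClosure (π ⁻¹' {b'})) :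
    ∃ c, (∃ t, π t = c) ∧ b + c = b' ∧ π ⁻¹' {b'} = π ⁻¹' {b} + π ⁻¹' {c} := by
  have exists_add_eq (w : N) (hw : π w = b') : ∃ u t, π u = b ∧ b + π t = b' ∧ u + t = w := by
    obtain ⟨u, hu, huw⟩ := mem_upperClosure.1 (hle (subset_upperClosure hw))
    obtain ⟨t, rfl⟩ := exists_add_of_le huw
    obtain rfl : π u = b := hu
    exact ⟨u, t, rfl, by rw [← map_add, hw], rfl⟩
  obtain ⟨v, hv⟩ := hb'
  obtain ⟨-, s, -, hs, -⟩ := exists_add_eq v hv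
  refine ⟨π s, ⟨s, rfl⟩, hs, Set.Subset.antisymm (fun w hw => ?_) ?_⟩
  · obtain ⟨u, t, hu, ht, rfl⟩ := exists_add_eq w hw
    exact Set.add_mem_add hu (add_left_cancel (ht.trans hs.symm))
  · rintro _ ⟨u, hu, t, ht, rfl⟩
    simp only [Set.mem_preimage, Set.mem_singleton_iff] at hu ht ⊢
    rw [map_add, hu, ht, hs]

theorem atomic_fibers_finite_general [WellQuasiOrderedLE (UpperSet N)] (π : N →+ M) :
    {b : M | (∃ u, π u = b) ∧
      ¬ ∃ b₁ b₂ : M, b₁ ≠ 0 ∧ b₂ ≠ 0 ∧ (∃ u₁, π u₁ = b₁) ∧ (∃ u₂, π u₂ = b₂) ∧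
        b₁ + b₂ = b ∧ π ⁻¹' {b} = π ⁻¹' {b₁} + π ⁻¹' {b₂}}.Finite := by
  refine Set.Finite.of_sdiff ?_ (Set.finite_singleton 0)
  have hwqo : WellQuasiOrdered fun b b' : M =>
      upperClosure (π ⁻¹' {b}) ≤ upperClosure (π ⁻¹' {b'}) :=
    fun f => wellQuasiOrdered_le fun k => upperClosure (π ⁻¹' {f k})
  refine IsAntichain.finite_of_wellQuasiOrdered ?_ hwqo
  rintro b ⟨⟨hb, -⟩, hb0⟩ b' ⟨⟨hb', hatomic⟩, -⟩ hne hle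
  obtain ⟨c, hc, hadd, hfiber⟩ := exists_fiber_eq_add_of_upperClosure_le π hb' hle
  have hc0 : c ≠ 0 := by
    rintro rfl
    exact hne (by simpa using hadd)
  exact hatomic ⟨b, c, hb0, hc0, hb, hc, hadd, hfiber⟩

end Fibers

theorem fiberPolytope_eq_add {d n : ℕ} {A : Matrix (Fin d) (Fin n) ℕ} {b b₁ b₂ : Fin d → ℕ}
    (h : A.mulVec ⁻¹' {b} = A.mulVec ⁻¹' {b₁} + A.mulVec ⁻¹' {b₂}) :
    fiberPolytope A b = fiberPolytope A b₁ + fiberPolytope A b₂ := by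
  let castHom : (Fin n → ℕ) →+ (Fin n → ℝ) := (Nat.castAddMonoidHom ℝ).compLeft (Fin n)
  change convexHull ℝ (castHom '' (A.mulVec ⁻¹' {b})) =
    convexHull ℝ (castHom '' (A.mulVec ⁻¹' {b₁})) + convexHull ℝ (castHom '' (A.mulVec ⁻¹' {b₂}))
  rw [h, Set.image_add, convexHull_add]

/-- **Finiteness of atomic fibers (Adams et al.).**  For a matrix `A ∈ ℕ^{d×n}` with
nonzero columns, call `b ∈ ℕA` *atomic* if there are no nonzero `b₁, b₂ ∈ ℕA` with
`b₁ + b₂ = b` and `P_b = P_{b₁} + P_{b₂}` (Minkowski sum).  Then the set of atomic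
elements of `ℕA` is finite. -/
theorem atomic_fibers_finite {d n : ℕ} (A : Matrix (Fin d) (Fin n) ℕ)
    (hcol : ∀ j : Fin n, ∃ i : Fin d, A i j ≠ 0) :
    { b : Fin d → ℕ | (∃ u : Fin n → ℕ, A.mulVec u = b) ∧
      ¬ ∃ b₁ b₂ : Fin d → ℕ, b₁ ≠ 0 ∧ b₂ ≠ 0 ∧
        (∃ u₁ : Fin n → ℕ, A.mulVec u₁ = b₁) ∧
        (∃ u₂ : Fin n → ℕ, A.mulVec u₂ = b₂) ∧
        b₁ + b₂ = b ∧
        fiberPolytope A b = fiberPolytope A b₁ + fiberPolytope A b₂ }.Finite :=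
  (atomic_fibers_finite_general A.mulVecLin.toAddMonoidHom).subset
    fun _ ⟨hb, hatomic⟩ => ⟨hb, fun ⟨b₁, b₂, h₁, h₂, hb₁, hb₂, hadd, hfiber⟩ =>
      hatomic ⟨b₁, b₂, h₁, h₂, hb₁, hb₂, hadd, fiberPolytope_eq_add hfiber⟩⟩
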